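/- Let α and β be complex numbers with Re(α − 2β) > −2, β ≠ 1, and such that 1+α and 2+α−β are not nonpositive integers and none of the digamma values below is taken at a pole. Then ₃F₂(1, α, β; 1+α, 2+α−β; 1) = [−α(1+α−β)/(2(β−1))]·[ψ((α+1)/2) − ψ(α/2) + ψ(α/2 − β + 1) − ψ((α+1)/2 − β + 1)]. -/

import Mathlib

/-- The ascending Pochhammer symbol `(x)_n`. -/
noncomputable def poch (x : ℂ) (n : ℕ) : ℂ := (ascPochhammer ℂ n).eval x

/-- The generalized hypergeometric series `₃F₂(a₁,a₂,a₃; b₁,b₂; 1)`. -/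
noncomputable def F32 (a1 a2 a3 b1 b2 : ℂ) : ℂ :=
  ∑' n : ℕ, poch a1 n * poch a2 n * poch a3 n / ((n.factorial : ℂ) * poch b1 n * poch b2 n)

/-- `z` is not a nonpositive integer (i.e. not a pole of `Γ` or `ψ`). -/
def NotPole (z : ℂ) : Prop := ∀ n : ℕ, z ≠ -(n : ℂ)

/-- The digamma function `ψ(z) = Γ'(z)/Γ(z)`. -/
noncomputable def digamma (z : ℂ) : ℂ := deriv Complex.Gamma z / Complex.Gamma z


open Filter Topology

theorem poch_zero (z : ℂ) : poch z 0 = 1 := by simp [poch]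

theorem poch_succ (z : ℂ) (n : ℕ) : poch z (n + 1) = poch z n * (z + n) := by
  simp [poch, ascPochhammer_succ_eval]

theorem poch_shift (z : ℂ) (n : ℕ) : z * poch (z + 1) n = poch z n * (z + n) := by
  induction n with
  | zero => simp [poch_zero]
  | succ n ih =>
    rw [poch_succ, poch_succ, ← mul_assoc, ih]; push_cast; ring

theorem NotPole.add_ne {z : ℂ} (h : NotPole z) (n : ℕ) : z + n ≠ 0 := fun e =>
  h n (eq_neg_of_add_eq_zero_left e)

theorem NotPole.ne {z : ℂ} (h : NotPole z) : z ≠ 0 := by simpa using h 0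

theorem NotPole.add_nat {z : ℂ} (h : NotPole z) (m : ℕ) : NotPole (z + m) := by
  intro n e
  apply h (n + m)
  push_cast
  linear_combination e

theorem NotPole.add_one {z : ℂ} (h : NotPole z) : NotPole (z + 1) := by
  simpa using h.add_nat 1

theorem poch_ne {z : ℂ} (h : NotPole z) (n : ℕ) : poch z n ≠ 0 := by
  induction n with
  | zero => simp [poch_zero]
  | succ n ih => rw [poch_succ]; exact mul_ne_zero ih (h.add_ne n)

theorem norm_add_nat_sub (z : ℂ) : Tendsto (fun n : ℕ => ‖z + n‖ - n) atTop (𝓝 z.re) := by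
  -- ‖z+n‖ - (n + re z) in [0, im^2/(n+re z)]
  have h1 : Tendsto (fun n : ℕ => z.re + z.im ^ 2 / ((n : ℝ) + z.re)) atTop (𝓝 (z.re + 0)) := by
    refine tendsto_const_nhds.add (Tendsto.div_atTop tendsto_const_nhds ?_)
    exact tendsto_atTop_add_const_right _ _ tendsto_natCast_atTop_atTop
  rw [add_zero] at h1
  refine tendsto_of_tendsto_of_tendsto_of_le_of_le' tendsto_const_nhds h1 ?_ ?_
  · refine Eventually.of_forall fun n => ?_
    have := Complex.re_le_norm (z + n)
    simp at this
    linarith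
  · obtain ⟨N, hN⟩ := exists_nat_gt (-z.re)
    filter_upwards [eventually_ge_atTop N] with n hn
    have hn' : (N : ℝ) ≤ n := by exact_mod_cast hn
    have hp : 0 < (n : ℝ) + z.re := by linarith
    have hq : 0 ≤ z.im ^ 2 / ((n : ℝ) + z.re) := by positivity
    have : ‖z + n‖ ≤ (n + z.re) + z.im ^ 2 / ((n : ℝ) + z.re) := by
      apply abs_le_of_sq_le_sq' _ (by positivity) |>.2
      rw [Complex.sq_norm, Complex.normSq_apply]
      have e : z.im ^ 2 / ((n : ℝ) + z.re) * (n + z.re) = z.im ^ 2 := by field_simp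
      simp
      nlinarith
    linarith

theorem norm_add_nat_atTop (z : ℂ) : Tendsto (fun n : ℕ => ‖z + n‖) atTop atTop := by
  have := (norm_add_nat_sub z).add_atTop (tendsto_natCast_atTop_atTop (R := ℝ))
  simpa using this

theorem summ_and_lim (β b : ℂ) (hb : NotPole b) (hc : 0 < (b - β).re) :
    Summable (fun n : ℕ => ‖poch β n / poch b n‖ / ‖b + n‖) ∧
      Tendsto (fun n : ℕ => poch β n / poch b n) atTop (𝓝 0) := by
  set x : ℕ → ℂ := fun n => poch β n / poch b n with hx
  have hxs : ∀ n, x (n + 1) * (b + n) = x n * (β + n) := by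
    intro n
    have := poch_ne hb n
    have := hb.add_ne n
    simp only [hx, poch_succ]
    field_simp
  set ε := (b - β).re / 2 with hε
  have hε0 : 0 < ε := by positivity
  have hev : ∀ᶠ n : ℕ in atTop, ε ≤ ‖b + n‖ - ‖β + n‖ := by
    have := (norm_add_nat_sub b).sub (norm_add_nat_sub β)
    have h2 : ε < b.re - β.re := by simp [hε] at *; linarith
    filter_upwards [this.eventually (lt_mem_nhds h2)] with n hn
    linarith
  obtain ⟨N, hN⟩ := eventually_atTop.1 hev
  have key : ∀ n ≥ N, ε * (‖x n‖ / ‖b + n‖) ≤ ‖x n‖ - ‖x (n + 1)‖ := by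
    intro n hn
    have hpos : 0 < ‖b + n‖ := norm_pos_iff.2 (hb.add_ne n)
    have h1 : ‖x (n + 1)‖ * ‖b + n‖ = ‖x n‖ * ‖β + n‖ := by rw [← norm_mul, hxs, norm_mul]
    rw [← mul_div_assoc, div_le_iff₀ hpos]
    nlinarith [hN n hn, norm_nonneg (x n)]
  have hnn : ∀ n, 0 ≤ ‖x n‖ / ‖b + n‖ := fun n => by positivity
  have hs : Summable (fun n : ℕ => ‖x n‖ / ‖b + n‖) := by
    rw [← summable_nat_add_iff N]
    refine summable_of_sum_range_le (c := ‖x N‖ / ε) (fun n => hnn _) fun n => ?_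
    rw [le_div_iff₀ hε0, Finset.sum_mul]
    calc _ ≤ ∑ i ∈ Finset.range n, (‖x (i + N)‖ - ‖x (i + 1 + N)‖) := by
          refine Finset.sum_le_sum fun i _ => ?_
          rw [mul_comm, show i + 1 + N = i + N + 1 by ring]
          exact key _ (by omega)
      _ = ‖x (0 + N)‖ - ‖x (n + N)‖ := Finset.sum_range_sub' (fun i => ‖x (i + N)‖) n
      _ ≤ _ := by simp
  refine ⟨hs, ?_⟩
  have hanti : Antitone fun n => ‖x (n + N)‖ := by
    refine antitone_nat_of_succ_le fun n => ?_
    have := key (n + N) (by omega)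
    have := mul_nonneg hε0.le (hnn (n + N))
    rw [show n + 1 + N = n + N + 1 by ring]
    linarith
  have hbdd : BddBelow (Set.range fun n => ‖x (n + N)‖) :=
    ⟨0, by rintro _ ⟨n, rfl⟩; exact norm_nonneg _⟩
  have hlim := tendsto_atTop_ciInf hanti hbdd
  set L := ⨅ n, ‖x (n + N)‖ with hL
  have hL0 : 0 ≤ L := Real.iInf_nonneg fun n => norm_nonneg _
  have hLe : ∀ n, L ≤ ‖x (n + N)‖ := fun n => ciInf_le hbdd n
  rcases hL0.eq_or_lt with h0 | h0
  · rw [← h0] at hlim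
    exact tendsto_zero_iff_norm_tendsto_zero.2 ((tendsto_add_atTop_iff_nat N).1 hlim)
  · exfalso
    -- L / ‖b+n‖ summable
    have hs1 : Summable (fun n : ℕ => L * (1 / ‖b + (n + N : ℕ)‖)) := by
      refine Summable.of_nonneg_of_le (fun n => by positivity) (fun n => ?_)
        ((summable_nat_add_iff N).2 hs)
      rw [mul_one_div]
      gcongr
      exact hLe n
    rw [summable_mul_left_iff h0.ne'] at hs1
    have hs2 := (summable_nat_add_iff (f := fun n : ℕ => 1 / ‖b + (n : ℕ)‖) N).1 hs1
    have hs3 : Summable (fun n : ℕ => 1 / (n : ℝ)) := by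
      have hev2 : ∀ᶠ n : ℕ in atTop, ‖1 / (n : ℝ)‖ ≤ 2 * (1 / ‖b + (n : ℕ)‖) := by
        obtain ⟨K, hK⟩ := exists_nat_ge ‖b‖
        filter_upwards [eventually_ge_atTop (K + 1)] with n hn
        have hn' : (K + 1 : ℝ) ≤ n := by exact_mod_cast hn
        have hn0 : (0 : ℝ) < n := by linarith [norm_nonneg b]
        have hpos : 0 < ‖b + n‖ := norm_pos_iff.2 (hb.add_ne n)
        rw [Real.norm_of_nonneg (by positivity), mul_one_div, div_le_div_iff₀ hn0 hpos]
        have := norm_add_le b n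
        simp at this
        linarith
      exact Summable.of_norm_bounded_eventually_nat (hs2.mul_left 2) hev2
    exact Real.not_summable_one_div_natCast hs3

theorem summ_U (α β b : ℂ) (hb : NotPole b) (hc : 0 < (b - β).re) :
    Summable (fun n : ℕ => poch β n / poch b n / (α + n)) := by
  have hs := (summ_and_lim β b hb hc).1
  refine Summable.of_norm_bounded_eventually_nat (hs.mul_left 2) ?_
  have h1 : ∀ᶠ n : ℕ in atTop, ‖b + n‖ ≤ 2 * ‖α + n‖ := by
    have := (norm_add_nat_atTop α).eventually_ge_atTop (‖b - α‖)
    filter_upwards [this] with n hn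
    have := norm_add_le (α + n) (b - α)
    rw [show α + n + (b - α) = b + n by ring] at this
    linarith
  filter_upwards [h1, (norm_add_nat_atTop α).eventually_gt_atTop 0] with n hn h0
  have hpos : 0 < ‖b + n‖ := norm_pos_iff.2 (hb.add_ne n)
  rw [norm_div, ← mul_div_assoc, div_le_div_iff₀ h0 hpos]
  nlinarith [norm_nonneg (poch β n / poch b n)]

theorem inv_lim (α : ℂ) : Tendsto (fun n : ℕ => 1 / (α + n)) atTop (𝓝 0) := by
  rw [tendsto_zero_iff_norm_tendsto_zero]
  simp only [one_div, norm_inv]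
  exact (norm_add_nat_atTop α).inv_tendsto_atTop

theorem recU (α β : ℂ) (hα : NotPole α) (hb : NotPole (2 + α - β))
    (hc : 0 < (2 + α - β - β).re) :
    (∑' n : ℕ, poch β n / poch (2 + α - β) n / (α + n)) +
      (1 + α - β) / (2 + α - β) *
        (∑' n : ℕ, poch β n / poch (2 + α - β + 1) n / (α + 1 + n)) =
      2 * (1 + α - β) / (α * (2 + α - β - β)) := by
  have hc' : 0 < (2 + α - β + 1 - β).re := by simp at *; linarith
  have hs1 := summ_U α β _ hb hc
  have hs2 := summ_U (α + 1) β _ hb.add_one hc'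
  have hl := (summ_and_lim β _ hb hc).2
  have hc0 : 2 + α - β - β ≠ 0 := by
    intro e; rw [e] at hc; simp at hc
  obtain ⟨c, hcd⟩ : ∃ c, c = 2 + α - β - β := ⟨_, rfl⟩
  obtain ⟨b, hbd⟩ : ∃ b, b = 2 + α - β := ⟨_, rfl⟩
  have hsd : 1 + α - β = b - 1 := by rw [hbd]; ring
  rw [← hcd] at hc0
  rw [hsd]
  rw [← hcd, ← hbd]
  rw [← hbd] at hs1 hs2 hl hb
  set G : ℕ → ℂ := fun n => -(poch β n / poch b n) * (1 / c + 1 / (α + n)) with hG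
  have hGl : Tendsto G atTop (𝓝 0) := by
    have := (hl.neg).mul (tendsto_const_nhds (x := 1 / c) |>.add (inv_lim α))
    simpa [hG] using this
  rw [← tsum_mul_left, ← hs1.tsum_add (hs2.mul_left _)]
  have hS := (hs1.add (hs2.mul_left ((b - 1) / b))).hasSum.tendsto_sum_nat
  have hstep : ∀ n : ℕ, poch β n / poch b n / (α + n) +
      (b - 1) / b * (poch β n / poch (b + 1) n / (α + 1 + n)) = G (n + 1) - G n := by
    intro n
    have e1 := poch_shift b n
    have n1 := hb.ne
    have n2 := hb.add_ne n
    have n3 := poch_ne hb n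
    have n4 := hα.add_ne n
    have n5 : α + 1 + n ≠ 0 := hα.add_one.add_ne n
    have n6 := poch_ne hb.add_one n
    have e2 : poch (b + 1) n = poch b n * (b + n) / b := by
      rw [← e1]; field_simp
    simp only [hG, poch_succ]
    rw [e2]
    push_cast
    have n7 : α + (n + 1) ≠ 0 := by convert n5 using 1; ring
    have hβ : β = b - c := by rw [hbd, hcd]; ring
    have hα' : α = 2 * b - 2 - c := by rw [hbd, hcd]; ring
    rw [show α + 1 + n = α + (n + 1) by ring]
    generalize poch b n = p at *
    generalize poch β n = q at *
    field_simp
    rw [hα', hβ]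
    ring
  simp only [hstep, Finset.sum_range_sub] at hS
  have := tendsto_nhds_unique hS (hGl.sub_const (G 0))
  have hα0 := hα.ne
  simp only [hstep]
  rw [this]
  simp [hG, poch_zero]
  field_simp
  rw [hcd, hbd]
  ring
theorem norm_Gamma_le (z : ℂ) (hz : 0 < z.re) : ‖Complex.Gamma z‖ ≤ Real.Gamma z.re := by
  rw [Complex.Gamma_eq_integral hz, Real.Gamma_eq_integral hz, Complex.GammaIntegral]
  refine (MeasureTheory.norm_integral_le_integral_norm _).trans (le_of_eq ?_)
  refine MeasureTheory.setIntegral_congr_fun measurableSet_Ioi fun x hx => ?_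
  have hx' : 0 < x := hx
  simp only [norm_mul]
  rw [Complex.norm_cpow_eq_rpow_re_of_pos hx', Complex.norm_real,
    Real.norm_of_nonneg (Real.exp_pos _).le]
  simp

theorem fac_aux (n K : ℕ) : (n + K).factorial ≤ n.factorial * (n + K) ^ K := by
  rw [← Nat.factorial_mul_ascFactorial]
  refine Nat.mul_le_mul_left _ ?_
  exact Nat.ascFactorial_le_pow_add n K

theorem Gamma_le_aux (K n : ℕ) (hn : 1 ≤ n) (x : ℝ) (hx : 0 < x) (hxK : x < K) :
    Real.Gamma (x + n + 1) ≤ n.factorial * ((n + K : ℕ) : ℝ) ^ x := by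
  have hK : (0 : ℝ) < K := hx.trans hxK
  have h := Real.Gamma_mul_add_mul_le_rpow_Gamma_mul_rpow_Gamma (s := n + 1)
    (t := ((n + K : ℕ) : ℝ) + 1) (a := 1 - x / K) (b := x / K) (by positivity) (by positivity)
    (by rw [sub_pos, div_lt_one hK]; exact hxK) (by positivity) (by ring)
  rw [Real.Gamma_nat_eq_factorial, Real.Gamma_nat_eq_factorial] at h
  have e : (1 - x / K) * ((n : ℝ) + 1) + x / K * (((n + K : ℕ) : ℝ) + 1) = x + n + 1 := by
    push_cast; field_simp; ring
  rw [e] at h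
  refine h.trans ?_
  have hf : (0 : ℝ) < n.factorial := by exact_mod_cast n.factorial_pos
  have h2 : ((n + K).factorial : ℝ) ≤ n.factorial * ((n + K : ℕ) : ℝ) ^ K := by
    exact_mod_cast fac_aux n K
  calc _ ≤ (n.factorial : ℝ) ^ (1 - x / K) * (n.factorial * ((n + K : ℕ) : ℝ) ^ K) ^ (x / K) := by
        gcongr
    _ = _ := by
        rw [Real.mul_rpow hf.le (by positivity), ← mul_assoc, ← Real.rpow_add hf,
          ← Real.rpow_natCast, ← Real.rpow_mul (by positivity)]
        congr 1
        · simp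
        · congr 1; field_simp

theorem deriv_lim (F : ℕ → ℂ → ℂ) (z : ℂ) (R C : ℝ) (hR : 0 < R)
    (hd : ∀ᶠ n in atTop, DifferentiableOn ℂ (F n) (Metric.closedBall z R))
    (hb : ∀ᶠ n in atTop, ∀ w ∈ Metric.sphere z R, ‖F n w‖ ≤ C)
    (hl : ∀ w ∈ Metric.sphere z R, Tendsto (fun n => F n w) atTop (𝓝 1)) :
    Tendsto (fun n => deriv (F n) z) atTop (𝓝 0) := by
  have h1 := DifferentiableOn.deriv_eq_smul_circleIntegral (c := z) hR
    (f := fun _ => (1 : ℂ)) (differentiableOn_const _)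
  simp only [deriv_const, smul_zero] at h1
  have key : Tendsto (fun n => ∮ w in C(z, R), (1 / (w - z) ^ 2) • F n w) atTop
      (𝓝 (∮ w in C(z, R), (1 / (w - z) ^ 2) • (1 : ℂ))) := by
    unfold circleIntegral
    have hmem : ∀ θ, circleMap z R θ ∈ Metric.sphere z R := fun θ =>
      circleMap_mem_sphere z hR.le θ
    refine intervalIntegral.tendsto_integral_filter_of_dominated_convergence
      (fun _ => R * (1 / R ^ 2 * C)) ?_ ?_ ?_ ?_
    · filter_upwards [hd] with n hn
      refine Continuous.aestronglyMeasurable ?_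
      have hc : Continuous fun θ => F n (circleMap z R θ) :=
        hn.continuousOn.comp_continuous (continuous_circleMap z R)
          fun θ => Metric.sphere_subset_closedBall (hmem θ)
      have hne : ∀ θ, circleMap z R θ - z ≠ 0 := fun θ =>
        sub_ne_zero.2 (circleMap_ne_center hR.ne')
      simp only [deriv_circleMap, smul_eq_mul]
      have hc0 := continuous_circleMap z R
      have hc1 := continuous_circleMap 0 R
      have := hc0.sub (continuous_const (y := z))
      exact (hc1.mul continuous_const).mul
        ((continuous_const.div (this.pow 2) fun θ => pow_ne_zero _ (hne θ)).mul hc)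
    · filter_upwards [hb] with n hn
      refine Eventually.of_forall fun θ _ => ?_
      have := hn _ (hmem θ)
      simp only [deriv_circleMap, smul_eq_mul, norm_mul, norm_div, norm_pow, norm_one,
        Complex.norm_I, mul_one, norm_circleMap_zero, circleMap_sub_center, abs_of_pos hR]
      gcongr
    · exact intervalIntegrable_const
    · refine Eventually.of_forall fun θ _ => ?_
      exact ((hl _ (hmem θ)).const_smul _).const_smul _
  rw [h1] at key
  have k2 := key.const_smul ((2 * (Real.pi : ℂ) * Complex.I)⁻¹)
  rw [smul_zero] at k2
  refine k2.congr' ?_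
  filter_upwards [hd] with n hn
  rw [hn.deriv_eq_smul_circleIntegral hR, smul_smul, inv_mul_cancel₀ Complex.two_pi_I_ne_zero,
    one_smul]

theorem Gamma_prod (z : ℂ) (hz : NotPole z) (n : ℕ) :
    Complex.Gamma (z + n) = (∏ j ∈ Finset.range n, (z + j)) * Complex.Gamma z := by
  induction n with
  | zero => simp
  | succ n ih =>
    rw [Finset.prod_range_succ, Nat.cast_succ, ← add_assoc, Complex.Gamma_add_one _ (hz.add_ne n),
      ih]; ring

theorem notPole_of_re {z : ℂ} (h : 0 < z.re) : NotPole z := by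
  intro n e
  rw [e] at h
  simp at h
  have : (0 : ℝ) ≤ n := n.cast_nonneg
  linarith

theorem digamma_lim (z : ℂ) (hz : 1 < z.re) :
    Tendsto (fun n : ℕ => digamma (z + (n + 1 : ℕ)) - Complex.log n) atTop (𝓝 0) := by
  set F : ℕ → ℂ → ℂ := fun n w => Complex.Gamma (w + (n + 1 : ℕ)) /
    (Complex.exp (Complex.log n * w) * n.factorial) with hF
  have hfac : ∀ n : ℕ, (n.factorial : ℂ) ≠ 0 := fun n => by exact_mod_cast n.factorial_ne_zero
  have hre : ∀ w ∈ Metric.closedBall z 1, 0 < w.re ∧ w.re ≤ z.re + 1 := by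
    intro w hw
    have h1 : ‖w - z‖ ≤ 1 := by simpa [dist_eq_norm] using hw
    have h2 := (Complex.abs_re_le_norm (w - z)).trans h1
    rw [abs_le] at h2
    simp at h2
    constructor <;> linarith
  have hl : ∀ w : ℂ, 0 < w.re → Tendsto (fun n => F n w) atTop (𝓝 1) := by
    intro w hw
    have hg0 : Complex.Gamma w ≠ 0 := Complex.Gamma_ne_zero (notPole_of_re hw)
    have := (Complex.GammaSeq_tendsto_Gamma w).inv₀ hg0 |>.const_mul (Complex.Gamma w)
    rw [mul_inv_cancel₀ hg0] at this
    refine this.congr' ?_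
    filter_upwards [eventually_ge_atTop 1] with n hn
    have hn0 : (n : ℂ) ≠ 0 := by exact_mod_cast (by omega : n ≠ 0)
    simp only [hF]
    rw [Gamma_prod w (notPole_of_re hw), Complex.GammaSeq, Complex.cpow_def_of_ne_zero hn0]
    rw [inv_div]
    ring
  have hdG : ∀ (n : ℕ) (w : ℂ), 0 < w.re → DifferentiableAt ℂ Complex.Gamma (w + (n + 1 : ℕ)) :=
    fun n w hw => Complex.differentiableAt_Gamma _ ((notPole_of_re hw).add_nat _)
  have hdE : ∀ (n : ℕ) (w : ℂ), HasDerivAt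
      (fun w => Complex.exp (Complex.log n * w) * (n.factorial : ℂ))
      (Complex.exp (Complex.log n * w) * Complex.log n * n.factorial) w := by
    intro n w
    have := (((hasDerivAt_id w).const_mul (Complex.log n)).cexp).mul_const (n.factorial : ℂ)
    simpa using this
  have hEne : ∀ (n : ℕ) (w : ℂ), Complex.exp (Complex.log n * w) * (n.factorial : ℂ) ≠ 0 :=
    fun n w => mul_ne_zero (Complex.exp_ne_zero _) (hfac n)
  have hdF : ∀ (n : ℕ) (w : ℂ), 0 < w.re → HasDerivAt (F n)
      ((digamma (w + (n + 1 : ℕ)) - Complex.log n) * F n w) w := by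
    intro n w hw
    have h1 : HasDerivAt (fun w => Complex.Gamma (w + (n + 1 : ℕ)))
        (deriv Complex.Gamma (w + (n + 1 : ℕ))) w :=
      (hdG n w hw).hasDerivAt.comp_add_const w _
    have h2 : HasDerivAt (F n) _ w := h1.div (hdE n w) (hEne n w)
    refine h2.congr_deriv ?_
    have hg0 : Complex.Gamma (w + (n + 1 : ℕ)) ≠ 0 :=
      Complex.Gamma_ne_zero ((notPole_of_re hw).add_nat _)
    have := hfac n
    have := Complex.exp_ne_zero (Complex.log n * w)
    simp only [hF, digamma]
    field_simp
  obtain ⟨K, hK⟩ := exists_nat_gt (z.re + 1)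
  have hder : Tendsto (fun n => deriv (F n) z) atTop (𝓝 0) := by
    refine deriv_lim F z 1 ((1 + K : ℝ) ^ (z.re + 1)) one_pos ?_ ?_ ?_
    · exact Eventually.of_forall fun n w hw =>
        (hdF n w (hre w hw).1).differentiableAt.differentiableWithinAt
    · filter_upwards [eventually_ge_atTop 1] with n hn w hw
      obtain ⟨hw0, hw1⟩ := hre w (Metric.sphere_subset_closedBall hw)
      have hnp : (1 : ℝ) ≤ n := by exact_mod_cast hn
      have hn0 : (n : ℂ) ≠ 0 := by exact_mod_cast (by omega : n ≠ 0)
      have hf : (0 : ℝ) < n.factorial := by exact_mod_cast n.factorial_pos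
      have h1 := norm_Gamma_le (w + (n + 1 : ℕ)) (by simp; positivity)
      have h2 := Gamma_le_aux K n hn w.re hw0 (by linarith)
      have e : (w + (n + 1 : ℕ)).re = w.re + n + 1 := by simp; ring
      rw [e] at h1
      simp only [hF]
      rw [← Complex.cpow_def_of_ne_zero hn0, norm_div, norm_mul, Complex.norm_natCast_cpow_of_pos hn,
        Complex.norm_natCast, div_le_iff₀ (by positivity)]
      refine (h1.trans h2).trans ?_
      have h3 : ((n + K : ℕ) : ℝ) ≤ (1 + K) * n := by
        push_cast
        nlinarith [(K.cast_nonneg : (0 : ℝ) ≤ K)]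
      calc (n.factorial : ℝ) * ((n + K : ℕ) : ℝ) ^ w.re
          ≤ n.factorial * ((1 + K) * n) ^ w.re := by gcongr
        _ = n.factorial * ((1 + K : ℝ) ^ w.re * (n : ℝ) ^ w.re) := by
            rw [Real.mul_rpow (by positivity) (by positivity)]
        _ ≤ n.factorial * ((1 + K : ℝ) ^ (z.re + 1) * (n : ℝ) ^ w.re) := by
            gcongr
            simp
        _ = _ := by ring
    · exact fun w hw => hl w (hre w (Metric.sphere_subset_closedBall hw)).1
  have hz0 : 0 < z.re := by linarith
  have := hder.div (hl z hz0) one_ne_zero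
  rw [zero_div] at this
  refine this.congr fun n => ?_
  have hne : F n z ≠ 0 := div_ne_zero
    (Complex.Gamma_ne_zero ((notPole_of_re hz0).add_nat _)) (hEne n z)
  change deriv (F n) z / F n z = _
  rw [(hdF n z hz0).deriv, mul_div_cancel_right₀ _ hne]

theorem digamma_diff_lim (z w : ℂ) :
    Tendsto (fun n : ℕ => digamma (z + n) - digamma (w + n)) atTop (𝓝 0) := by
  obtain ⟨k, hk⟩ := exists_nat_gt (max (1 - z.re) (1 - w.re))
  have hk1 := (le_max_left _ _).trans_lt hk
  have hk2 := (le_max_right _ _).trans_lt hk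
  have h1 := digamma_lim (z + k) (by simp; linarith)
  have h2 := digamma_lim (w + k) (by simp; linarith)
  have := h1.sub h2
  rw [sub_zero] at this
  rw [← tendsto_add_atTop_iff_nat (k + 1)]
  refine this.congr fun n => ?_
  push_cast
  rw [show z + k + (n + 1) = z + (n + (k + 1)) by ring,
    show w + k + (n + 1) = w + (n + (k + 1)) by ring]
  ring

theorem digamma_add_one {z : ℂ} (hz : NotPole z) : digamma (z + 1) = digamma z + z⁻¹ := by
  have := Complex.digamma_apply_add_one z hz
  simpa [Complex.digamma_def, logDeriv_apply, digamma] using this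

noncomputable def Uf (β α : ℂ) : ℂ := ∑' n : ℕ, poch β n / poch (2 + α - β) n / (α + n)

noncomputable def Pf (z : ℂ) : ℂ := digamma ((z + 1) / 2) - digamma (z / 2)

theorem poch_norm_le (β b : ℂ) (h : ‖β‖ ≤ b.re) (n : ℕ) : ‖poch β n‖ ≤ ‖poch b n‖ := by
  induction n with
  | zero => simp [poch_zero]
  | succ n ih =>
    rw [poch_succ, poch_succ, norm_mul, norm_mul]
    have h1 : ‖β + n‖ ≤ ‖b + n‖ := by
      have h2 := norm_add_le β n
      have h3 := Complex.re_le_norm (b + n)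
      simp at h2 h3
      linarith
    gcongr

theorem V_lim (β α : ℂ) :
    Tendsto (fun m : ℕ => Uf β (α + m) / (2 * (1 + (α + m) - β))) atTop (𝓝 0) := by
  have hm : ∀ᶠ m : ℕ in atTop, 2 ≤ (m : ℝ) ∧ ‖β‖ ≤ (1 + (α + m) - β).re ∧
      (m : ℝ) / 2 ≤ (1 + (α + m) - β).re ∧ (m : ℝ) / 2 ≤ (α + m).re := by
    obtain ⟨N, hN⟩ := exists_nat_ge (2 + ‖β‖ + 2 * ‖α‖ + 2 * ‖β‖)
    filter_upwards [eventually_ge_atTop N] with m hm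
    have hm' : (N : ℝ) ≤ m := by exact_mod_cast hm
    have h1 := (abs_le.1 (Complex.abs_re_le_norm α)).1
    have h2 := (abs_le.1 (Complex.abs_re_le_norm β)).2
    have h3 := norm_nonneg α
    have h4 := norm_nonneg β
    refine ⟨?_, ?_, ?_, ?_⟩ 
    · linarith
    all_goals simp; linarith
  have hbd : ∀ᶠ m : ℕ in atTop, ∀ n : ℕ,
      ‖poch β n / poch (2 + (α + m) - β) n / (α + m + n) / (2 * (1 + (α + m) - β))‖ ≤
        1 / ((m : ℝ) / 2 + n) ^ 2 := by
    filter_upwards [hm] with m ⟨h0, h1, h2, h3⟩ n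
    obtain ⟨b, hb⟩ : ∃ b, b = 1 + (α + m) - β := ⟨_, rfl⟩
    rw [show 2 + (α + m) - β = b + 1 by rw [hb]; ring, ← hb]
    rw [← hb] at h1 h2
    have hnp : NotPole b := notPole_of_re (by linarith)
    have hp : 0 < (m : ℝ) / 2 + n := by positivity
    have e1 : (m : ℝ) / 2 + n ≤ ‖b + n‖ := by
      have := Complex.re_le_norm (b + n)
      simp at this; linarith
    have e2 : (m : ℝ) / 2 + n ≤ ‖α + m + n‖ := by
      have := Complex.re_le_norm (α + m + n)
      simp at this h3; linarith
    have e3 := poch_norm_le β b h1 n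
    have e4 := poch_ne hnp n
    have e5 : poch β n / poch (b + 1) n / (α + m + n) / (2 * b) =
        poch β n / poch b n * (1 / ((b + n) * (α + m + n))) * (1 / 2) := by
      have := poch_shift b n
      have n1 := hnp.ne
      have n2 := hnp.add_ne n
      have e2 : poch (b + 1) n = poch b n * (b + n) / b := by
        rw [← this]; field_simp
      rw [e2]
      field_simp
    rw [e5, norm_mul, norm_mul, norm_div, norm_div, norm_mul]
    have q1 : ‖poch β n‖ / ‖poch b n‖ ≤ 1 := div_le_one_of_le₀ e3 (norm_nonneg _)
    have q2 : ‖(1 : ℂ)‖ / (‖b + n‖ * ‖α + m + n‖) ≤ 1 / ((m : ℝ) / 2 + n) ^ 2 := by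
      rw [norm_one, sq]; gcongr
    have q3 : ‖(1 / 2 : ℂ)‖ ≤ 1 := by norm_num
    calc _ ≤ 1 * (1 / ((m : ℝ) / 2 + n) ^ 2) * 1 := by gcongr
      _ = _ := by ring
  simp only [Uf, ← tsum_div_const]
  have hsum : Summable fun n : ℕ => 1 / ((n : ℝ) + 1) ^ 2 := by
    have := (summable_nat_add_iff 1).2 (Real.summable_one_div_nat_pow.2 one_lt_two)
    simpa using this
  have := tendsto_tsum_of_dominated_convergence (𝓕 := atTop)
    (f := fun (m : ℕ) (n : ℕ) =>
      poch β n / poch (2 + (α + m) - β) n / (α + m + n) / (2 * (1 + (α + m) - β)))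
    (g := fun _ => 0) (bound := fun n : ℕ => 1 / ((n : ℝ) + 1) ^ 2) hsum ?_ ?_
  · simpa using this
  · intro n
    have hl : Tendsto (fun m : ℕ => 1 / ((m : ℝ) / 2 + n) ^ 2) atTop (𝓝 0) := by
      refine Tendsto.div_atTop tendsto_const_nhds ?_
      refine (tendsto_pow_atTop two_ne_zero).comp ?_
      refine tendsto_atTop_add_const_right _ _ ?_
      exact tendsto_natCast_atTop_atTop.atTop_div_const two_pos
    refine squeeze_zero_norm' ?_ hl
    filter_upwards [hbd] with m h using h n
  · filter_upwards [hbd, hm] with m h h' n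
    refine (h n).trans ?_
    have : (1 : ℝ) ≤ m / 2 := by linarith [h'.1]
    have h0 : (n : ℝ) + 1 ≤ m / 2 + n := by linarith
    gcongr

theorem Pf_add_one {z : ℂ} (hz : NotPole z) : Pf (z + 1) = 2 / z - Pf z := by
  have h2 : NotPole (z / 2) := by
    intro n e
    apply hz (2 * n)
    push_cast
    linear_combination 2 * e
  simp only [Pf]
  rw [show (z + 1 + 1) / 2 = z / 2 + 1 by ring, digamma_add_one h2]
  have := hz.ne
  field_simp
  ring

theorem Pf_lim (z : ℂ) : Tendsto (fun j : ℕ => Pf (z + (2 * j : ℕ))) atTop (𝓝 0) := by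
  refine (digamma_diff_lim ((z + 1) / 2) (z / 2)).congr fun j => ?_
  simp only [Pf]
  push_cast
  congr 2 <;> ring

theorem Ef_step (α c : ℂ) (hα : NotPole α) (hc : NotPole c) (hne : c - α ≠ 0) :
    (Pf (α + 1) - Pf (c + 1)) / (2 * (c - α)) =
      1 / (α * c) - (Pf α - Pf c) / (2 * (c - α)) := by
  rw [Pf_add_one hα, Pf_add_one hc]
  have := hα.ne
  have := hc.ne
  field_simp
  ring

theorem core (α β : ℂ) (hβ : β ≠ 1) (hα : NotPole α) (hs : NotPole (1 + α - β))
    (hc : 0 < (2 + α - β - β).re) :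
    Uf β α / (2 * (1 + α - β)) =
      (Pf α - Pf (2 + α - β - β)) / (2 * ((2 + α - β - β) - α)) := by
  obtain ⟨c, hcd⟩ : ∃ c, c = 2 + α - β - β := ⟨_, rfl⟩
  rw [← hcd] at hc ⊢
  have hne : c - α ≠ 0 := by
    rw [hcd]
    intro e
    apply hβ
    linear_combination (-1 / 2) * e
  have hcp := notPole_of_re hc
  set D : ℕ → ℂ := fun m => Uf β (α + m) / (2 * (1 + (α + m) - β)) -
    (Pf (α + m) - Pf (c + m)) / (2 * (c - α)) with hD
  have hstep : ∀ m, D (m + 1) = - D m := by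
    intro m
    have hsm : NotPole (1 + (α + m) - β) := by
      have := hs.add_nat m
      convert this using 1; ring
    have hbm : NotPole (2 + (α + m) - β) := by
      have := hsm.add_one
      convert this using 1; ring
    have hcm : 2 + (α + m) - β - β = c + m := by rw [hcd]; ring
    have r := recU (α + m) β (hα.add_nat m) hbm (by rw [hcm]; simp; positivity)
    have e := Ef_step (α + m) (c + m) (hα.add_nat m) (hcp.add_nat m) (by simpa using hne)
    rw [hcm] at r
    rw [show c + m - (α + m) = c - α by ring] at e
    have hU : Uf β (α + m + 1) = ∑' n : ℕ, poch β n / poch (2 + (α + m) - β + 1) n /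
        (α + m + 1 + n) := by
      simp only [Uf]
      rw [show 2 + (α + m + 1) - β = 2 + (α + m) - β + 1 by ring]
    rw [← hU] at r
    change Uf β (α + m) + _ = _ at r
    simp only [hD]
    push_cast
    rw [← add_assoc α, ← add_assoc c, e]
    rw [show 1 + (α + m + 1) - β = 2 + (α + m) - β by ring]
    have r2 : Uf β (α + m) = 2 * (1 + (α + m) - β) / ((α + m) * (c + m)) -
      (1 + (α + m) - β) / (2 + (α + m) - β) * Uf β (α + m + 1) := by
      rw [← r]; ring
    rw [r2]
    have n1 := hsm.ne
    have n2 := hbm.ne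
    have n3 := (hα.add_nat m).ne
    have n4 := (hcp.add_nat m).ne
    generalize Pf (α + m) = p1
    generalize Pf (c + m) = p2
    generalize Uf β (α + m + 1) = u
    generalize 1 + (α + m) - β = s at *
    generalize 2 + (α + m) - β = b at *
    generalize α + m = a at *
    generalize c + m = d at *
    field_simp
    ring
  have h2 : ∀ j, D (2 * j) = D 0 := by
    intro j
    induction j with
    | zero => rfl
    | succ j ih => rw [show 2 * (j + 1) = 2 * j + 1 + 1 by ring, hstep, hstep, neg_neg, ih]
  have htop : Tendsto (fun j : ℕ => 2 * j) atTop atTop :=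
    tendsto_atTop_mono (fun n => by simp only [id]; omega) tendsto_id
  have hlim : Tendsto (fun j => D (2 * j)) atTop (𝓝 0) := by
    have a1 := (V_lim β α).comp htop
    have a2 := ((Pf_lim α).sub (Pf_lim c)).div_const (2 * (c - α))
    have := a1.sub a2
    simpa [hD, Function.comp_def] using this
  simp only [h2] at hlim
  have := tendsto_nhds_unique hlim tendsto_const_nhds
  simp only [hD, Nat.cast_zero, add_zero] at this
  exact sub_eq_zero.1 this.symm

theorem F32_eq (α β : ℂ) (hα : NotPole α) :
    F32 1 α β (1 + α) (2 + α - β) = α * Uf β α := by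
  rw [F32, Uf, ← tsum_mul_left]
  congr 1
  ext n
  have h1 : poch 1 n = n.factorial := by simp [poch]
  have hf : (n.factorial : ℂ) ≠ 0 := by exact_mod_cast n.factorial_ne_zero
  have h2 := poch_shift α n
  have h3 := hα.add_ne n
  have h4 := poch_ne hα.add_one n
  have h5 : poch α n = α * poch (α + 1) n / (α + n) := by rw [h2]; field_simp
  rw [h1, add_comm 1 α, h5]
  field_simp

theorem F32_summation_formula' (α β : ℂ) (h : -2 < (α - 2 * β).re) (hβ : β ≠ 1)
    (hl₁ : NotPole (1 + α)) (hl₂ : NotPole (2 + α - β))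
    (hp₁ : NotPole ((α + 1) / 2)) (hp₂ : NotPole (α / 2))
    (hp₃ : NotPole (α / 2 - β + 1)) (hp₄ : NotPole ((α + 1) / 2 - β + 1)) :
    F32 1 α β (1 + α) (2 + α - β) =
      -α * (1 + α - β) / (2 * (β - 1)) *
        (digamma ((α + 1) / 2) - digamma (α / 2) + digamma (α / 2 - β + 1) -
          digamma ((α + 1) / 2 - β + 1)) := by
  have hα : NotPole α := by
    intro n e
    cases n with
    | zero => exact hp₂ 0 (by rw [e]; simp)
    | succ n => exact hl₁ n (by rw [e]; push_cast; ring)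
  obtain ⟨c, hcd⟩ : ∃ c, c = 2 + α - β - β := ⟨_, rfl⟩
  have hc : 0 < c.re := by
    rw [hcd]
    simp at h ⊢
    linarith
  have hcp := notPole_of_re hc
  have hne : c - α ≠ 0 := by
    rw [hcd]
    intro e
    apply hβ
    linear_combination (-1 / 2) * e
  have hc1 : 2 + (α + 1) - β - β = c + 1 := by rw [hcd]; ring
  have hsb : 1 + (α + 1) - β = 2 + α - β := by ring
  have k := core (α + 1) β hβ hα.add_one (by rw [hsb]; exact hl₂) (by rw [hc1]; simp; linarith)
  have r := recU α β hα hl₂ (by rw [← hcd]; exact hc)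
  have hU : Uf β (α + 1) = ∑' n : ℕ, poch β n / poch (2 + α - β + 1) n / (α + 1 + n) := by
    simp only [Uf]
    rw [show 2 + (α + 1) - β = 2 + α - β + 1 by ring]
  rw [← hU, ← hcd] at r
  change Uf β α + _ = _ at r
  rw [hc1, hsb, show c + 1 - (α + 1) = c - α by ring, Ef_step α c hα hcp hne] at k
  have n1 := hl₂.ne
  have n2 := hα.ne
  have n3 := hcp.ne
  have k2 : Uf β (α + 1) = 2 * (2 + α - β) *
      (1 / (α * c) - (Pf α - Pf c) / (2 * (c - α))) := by
    rw [← k]; field_simp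
  rw [F32_eq α β hα]
  have e1 : digamma ((α + 1) / 2) - digamma (α / 2) + digamma (α / 2 - β + 1) -
      digamma ((α + 1) / 2 - β + 1) = Pf α - Pf c := by
    simp only [Pf]
    rw [show (c + 1) / 2 = (α + 1) / 2 - β + 1 by rw [hcd]; ring,
      show c / 2 = α / 2 - β + 1 by rw [hcd]; ring]
    ring
  rw [e1]
  have k3 : Uf β α = 2 * (1 + α - β) / (α * c) -
      (1 + α - β) / (2 + α - β) * Uf β (α + 1) := by
    rw [← r]; ring
  have hca : 2 * (β - 1) = -(c - α) := by rw [hcd]; ring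
  rw [k3, k2, hca]
  generalize Pf α - Pf c = p
  generalize 1 + α - β = s
  generalize 2 + α - β = b at *
  have hne' : -(c - α) ≠ 0 := neg_ne_zero.2 hne
  generalize c - α = d at *
  field_simp
  ring
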